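/- arXiv:2105.06098 — 3 statements merged into one kernel-verified Lean document; each statement's English description precedes it below -/
import Mathlib

section
/- Let q : ℝ×ℝ → ℂ be smooth. Then q satisfies the TOFKN equation q_t + q_{xxx} − 3i(|q|²q_x)_x − (3/2)(|q|⁴q)_x = 0 at every point (x,t) if and only if for every λ ∈ ℂ and every (x,t) ∈ ℝ×ℝ the zero-curvature (compatibility) equation ∂_t X(λ;x,t) − ∂_x T(λ;x,t) + X(λ;x,t)·T(λ;x,t) − T(λ;x,t)·X(λ;x,t) = 0 holds as an identity of 2×2 complex matrices. -/
noncomputable section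

open Complex Matrix MeasureTheory ComplexConjugate Filter

abbrev Mat2 : Type := Matrix (Fin 2) (Fin 2) ℂ

/-- Partial derivative in the first (space) variable of a function on `ℝ × ℝ`. -/
def px (f : ℝ × ℝ → ℂ) : ℝ × ℝ → ℂ := fun p => deriv (fun y => f (y, p.2)) p.1

/-- Partial derivative in the second (time) variable of a function on `ℝ × ℝ`. -/
def pt (f : ℝ × ℝ → ℂ) : ℝ × ℝ → ℂ := fun p => deriv (fun s => f (p.1, s)) p.2

/-- Entrywise partial derivative in `x` of a matrix-valued function. -/
def DxM (M : ℝ × ℝ → Mat2) : ℝ × ℝ → Mat2 :=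
  fun p => Matrix.of fun i j => deriv (fun y => M (y, p.2) i j) p.1

/-- Entrywise partial derivative in `t` of a matrix-valued function. -/
def DtM (M : ℝ × ℝ → Mat2) : ℝ × ℝ → Mat2 :=
  fun p => Matrix.of fun i j => deriv (fun s => M (p.1, s) i j) p.2

def sigma1 : Mat2 := !![0, 1; 1, 0]
def sigma2 : Mat2 := !![0, -Complex.I; Complex.I, 0]
def sigma3 : Mat2 := !![1, 0; 0, -1]

/-- The potential matrix `Q`. -/
def Qmat (q : ℝ × ℝ → ℂ) : ℝ × ℝ → Mat2 := fun p => !![0, q p; -conj (q p), 0]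

/-- `|q|² = q ⬝ conj q`. -/
def msq (q : ℝ × ℝ → ℂ) : ℝ × ℝ → ℂ := fun p => q p * conj (q p)

/-- The `x`-part Lax matrix `X(λ; x, t) = iλ²σ₃ + λQ`. -/
def Xmat (q : ℝ × ℝ → ℂ) (l : ℂ) : ℝ × ℝ → Mat2 :=
  fun p => (Complex.I * l ^ 2) • sigma3 + l • Qmat q p

/-- The `t`-part Lax matrix `T(λ; x, t)`. -/
def Tmat (q : ℝ × ℝ → ℂ) (l : ℂ) : ℝ × ℝ → Mat2 := fun p =>
  (4 * l ^ 4 + (3 / 2) * (msq q p) ^ 2 - 2 * l ^ 2 * msq q p) • Xmat q l p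
    + (-2 * Complex.I * l ^ 3 + 3 * Complex.I * l * msq q p) • (sigma3 * DxM (Qmat q) p)
    - (l ^ 2 * (px q p * conj (q p) - q p * px (fun p' => conj (q p')) p)) • sigma3
    - l • DxM (DxM (Qmat q)) p

/-- The third-order flow Kaup–Newell equation
`q_t + q_{xxx} − 3i(|q|²q_x)_x − (3/2)(|q|⁴q)_x = 0`. -/
def TOFKN (q : ℝ × ℝ → ℂ) : Prop :=
  ∀ p : ℝ × ℝ,
    pt q p + px (px (px q)) p
      - 3 * Complex.I * px (fun p' => msq q p' * px q p') p
      - (3 / 2) * px (fun p' => (msq q p') ^ 2 * q p') p = 0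

theorem aux_px_hasDerivAt {f : ℝ × ℝ → ℂ} (hf : ContDiff ℝ (⊤ : ℕ∞) f) (x t : ℝ) :
    HasDerivAt (fun y => f (y, t)) (px f (x, t)) x := by
  have h : ContDiff ℝ (⊤ : ℕ∞) (fun y : ℝ => f (y, t)) := by fun_prop
  exact ((h.differentiable (by simp)) x).hasDerivAt

theorem aux_pt_hasDerivAt {f : ℝ × ℝ → ℂ} (hf : ContDiff ℝ (⊤ : ℕ∞) f) (x t : ℝ) :
    HasDerivAt (fun s => f (x, s)) (pt f (x, t)) t := by
  have h : ContDiff ℝ (⊤ : ℕ∞) (fun s : ℝ => f (x, s)) := by fun_prop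
  exact ((h.differentiable (by simp)) t).hasDerivAt

theorem aux_conj {f : ℝ → ℂ} {f' : ℂ} {x : ℝ} (h : HasDerivAt f f' x) :
    HasDerivAt (fun y => conj (f y)) (conj f') x := h.star

theorem aux_px_contDiff {f : ℝ × ℝ → ℂ} (hf : ContDiff ℝ (⊤ : ℕ∞) f) :
    ContDiff ℝ (⊤ : ℕ∞) (px f) := by
  have e : px f = fun p => fderiv ℝ f p (1, 0) := by
    funext p
    have h1 : HasFDerivAt f (fderiv ℝ f (p.1, p.2)) (p.1, p.2) :=
      ((hf.differentiable (by simp)) _).hasFDerivAt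
    have h2 : HasDerivAt (fun y : ℝ => (y, p.2)) ((1 : ℝ), (0 : ℝ)) p.1 :=
      (hasDerivAt_id p.1).prodMk (hasDerivAt_const _ _)
    exact (h1.comp_hasDerivAt p.1 h2).deriv
  rw [e]
  exact (hf.fderiv_right (by simp)).clm_apply contDiff_const

theorem aux_DxM_Q {q : ℝ × ℝ → ℂ} (hq : ContDiff ℝ (⊤ : ℕ∞) q) :
    DxM (Qmat q) = Qmat (px q) := by
  funext p
  obtain ⟨x, t⟩ := p
  have h := aux_px_hasDerivAt hq x t
  ext i j
  fin_cases i <;> fin_cases j <;> simp [DxM, Qmat]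
  · rfl
  · exact (aux_conj h).deriv

theorem aux_px_conj {q : ℝ × ℝ → ℂ} (hq : ContDiff ℝ (⊤ : ℕ∞) q) (p : ℝ × ℝ) :
    px (fun p' => conj (q p')) p = conj (px q p) :=
  (aux_conj (aux_px_hasDerivAt hq p.1 p.2)).deriv

theorem aux_mat {M M' : ℝ × ℝ → Mat2} {p : ℝ × ℝ} {a b c d : ℂ} (h : M = M')
    (h00 : DxM M' p 0 0 = a) (h01 : DxM M' p 0 1 = b) (h10 : DxM M' p 1 0 = c)
    (h11 : DxM M' p 1 1 = d) : DxM M p = !![a, b; c, d] := by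
  subst h
  ext i j
  fin_cases i <;> fin_cases j
  · exact h00
  · exact h01
  · exact h10
  · exact h11

/-- The residual matrix in closed form. -/
theorem aux_main (q : ℝ × ℝ → ℂ) (hq : ContDiff ℝ (⊤ : ℕ∞) q) (l : ℂ) (p : ℝ × ℝ) :
    DtM (Xmat q l) p - DxM (Tmat q l) p
        + Xmat q l p * Tmat q l p - Tmat q l p * Xmat q l p =
      l • Qmat (fun p => pt q p + px (px (px q)) p
      - 3 * Complex.I * px (fun p' => msq q p' * px q p') p
      - (3 / 2) * px (fun p' => (msq q p') ^ 2 * q p') p) p := by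
  obtain ⟨x, t⟩ := p
  have hq1 := aux_px_contDiff hq
  have hq2 := aux_px_contDiff hq1
  have d0 := aux_px_hasDerivAt hq x t
  have d1 := aux_px_hasDerivAt hq1 x t
  have d2 := aux_px_hasDerivAt hq2 x t
  have dt := aux_pt_hasDerivAt hq x t
  have c0 := aux_conj d0
  have c1 := aux_conj d1
  have c2 := aux_conj d2
  have ct := aux_conj dt
  have dm : HasDerivAt (fun y => msq q (y, t)) _ x := d0.mul c0
  have e1 : px (fun p' => msq q p' * px q p') (x, t) = _ := (dm.mul d1).deriv
  have e2 : px (fun p' => (msq q p') ^ 2 * q p') (x, t) = _ := ((dm.pow 2).mul d0).deriv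
  have hT : Tmat q l = fun p =>
      !![(4 * l ^ 4 + (3 / 2) * (msq q p) ^ 2 - 2 * l ^ 2 * msq q p) * (Complex.I * l ^ 2)
          - l ^ 2 * (px q p * conj (q p) - q p * conj (px q p)),
        (4 * l ^ 4 + (3 / 2) * (msq q p) ^ 2 - 2 * l ^ 2 * msq q p) * (l * q p)
          + (-2 * Complex.I * l ^ 3 + 3 * Complex.I * l * msq q p) * px q p
          - l * px (px q) p;
        -((4 * l ^ 4 + (3 / 2) * (msq q p) ^ 2 - 2 * l ^ 2 * msq q p) * (l * conj (q p)))
          + (-2 * Complex.I * l ^ 3 + 3 * Complex.I * l * msq q p) * conj (px q p)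
          + l * conj (px (px q) p),
        -((4 * l ^ 4 + (3 / 2) * (msq q p) ^ 2 - 2 * l ^ 2 * msq q p) * (Complex.I * l ^ 2))
          + l ^ 2 * (px q p * conj (q p) - q p * conj (px q p))] := by
    funext p
    simp only [Tmat, aux_DxM_Q hq, aux_DxM_Q hq1, aux_px_conj hq]
    ext i j
    fin_cases i <;> fin_cases j <;> simp [Xmat, Qmat, sigma3]
  have hX : Xmat q l = fun p =>
      !![Complex.I * l ^ 2, l * q p; -(l * conj (q p)), -(Complex.I * l ^ 2)] := by
    funext p
    ext i j
    fin_cases i <;> fin_cases j <;> simp [Xmat, Qmat, sigma3]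
  have hXt : DtM (Xmat q l) (x, t) = !![0, l * pt q (x, t); -(l * conj (pt q (x, t))), 0] := by
    rw [hX]
    ext i j
    fin_cases i <;> fin_cases j <;> simp only [DtM] <;> simp
    · left; rfl
    · left; exact ct.deriv
  have dA := (((dm.pow 2).const_mul (3 / 2 : ℂ)).const_add (4 * l ^ 4)).sub
    (dm.const_mul (2 * l ^ 2))
  have dB := (dm.const_mul (3 * Complex.I * l)).const_add (-2 * Complex.I * l ^ 3)
  have dW := ((d1.mul c0).sub (d0.mul c1)).const_mul (l ^ 2)
  have h00 := ((dA.mul_const (Complex.I * l ^ 2)).sub dW).deriv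
  have h01 := (((dA.mul (d0.const_mul l)).add (dB.mul d1)).sub (d2.const_mul l)).deriv
  have h10 := (((dA.mul (c0.const_mul l)).neg.add (dB.mul c1)).add (c2.const_mul l)).deriv
  have h11 := ((dA.mul_const (Complex.I * l ^ 2)).neg.add dW).deriv
  have hTx := aux_mat (p := (x, t)) hT h00 h01 h10 h11
  rw [hXt, hTx, hT, hX]
  simp only [Qmat]
  rw [e1, e2]
  have hI : Complex.I ^ 2 = -1 := Complex.I_sq
  have hc2 : conj (2 : ℂ) = 2 := Complex.conj_ofNat 2
  have hc3 : conj (3 : ℂ) = 3 := Complex.conj_ofNat 3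
  ext i j
  fin_cases i <;> fin_cases j <;>
    simp [msq, Matrix.mul_apply, Fin.sum_univ_two, hc2, hc3] <;>
    ring_nf <;> simp only [hI] <;> ring


theorem tofkn_iff_zero_curvature (q : ℝ × ℝ → ℂ) (hq : ContDiff ℝ (⊤ : ℕ∞) q) :
    TOFKN q ↔ ∀ (l : ℂ) (p : ℝ × ℝ),
      DtM (Xmat q l) p - DxM (Tmat q l) p
        + Xmat q l p * Tmat q l p - Tmat q l p * Xmat q l p = 0 := by
  constructor
  · intro h l p
    rw [aux_main q hq]
    have hp := h p
    ext i j
    fin_cases i <;> fin_cases j <;> simp only [Qmat, hp] <;> simp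
  · intro h p
    have h1 := h 1 p
    rw [aux_main q hq] at h1
    have h2 := congrFun (congrFun h1 0) 1
    simpa [Qmat] using h2
end
end

section
/- Fix q0 > 0 and q_± ∈ ℂ with |q_±| = q0, and let z ∈ ℂ∖{0}. Write λ = λ(z), k = k(z), and θ(z;x,t) = λk[x + (4λ⁴ + (3/2)q0⁴ − 2λ²q0²)t]. Then the matrix function Ψ^{bg}(x,t) = Y_±(z)·diag(e^{iθ(z;x,t)}, e^{−iθ(z;x,t)}) satisfies ∂_x Ψ^{bg} = X_±(λ)·Ψ^{bg} and ∂_t Ψ^{bg} = T_±(λ)·Ψ^{bg} at every (x,t) ∈ ℝ×ℝ. -/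
noncomputable section

open Complex Matrix ComplexConjugate

/-- The constant boundary potential matrix `Q±`. -/
def Qb (qb : ℂ) : Mat2 := !![0, qb; -conj qb, 0]

/-- The asymptotic Lax matrix `X± = iλ²σ₃ + λQ±`. -/
def Xb (qb : ℂ) (l : ℂ) : Mat2 := (Complex.I * l ^ 2) • sigma3 + l • Qb qb

/-- The asymptotic Lax matrix `T± = (4λ⁴ + (3/2)q₀⁴ − 2λ²q₀²)·X±`. -/
def Tb (q0 : ℝ) (qb : ℂ) (l : ℂ) : Mat2 :=
  (4 * l ^ 4 + (3 / 2) * (q0 : ℂ) ^ 4 - 2 * l ^ 2 * (q0 : ℂ) ^ 2) • Xb qb l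

/-- The uniformization map `λ(z) = (z − q₀²/z)/2`. -/
def lamz (q0 : ℝ) (z : ℂ) : ℂ := (z - (q0 : ℂ) ^ 2 / z) / 2

/-- The uniformization map `k(z) = (z + q₀²/z)/2`. -/
def kz (q0 : ℝ) (z : ℂ) : ℂ := (z + (q0 : ℂ) ^ 2 / z) / 2

/-- The eigenvector matrix `Y±(z) = I + (i/z)σ₃Q±`. -/
def Yz (qb : ℂ) (z : ℂ) : Mat2 := 1 + (Complex.I / z) • (sigma3 * Qb qb)

/-- The phase `θ(z; x, t) = λk[x + (4λ⁴ + (3/2)q₀⁴ − 2λ²q₀²)t]`. -/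
def thetaz (q0 : ℝ) (z : ℂ) (p : ℝ × ℝ) : ℂ :=
  lamz q0 z * kz q0 z *
    ((p.1 : ℂ)
      + (4 * (lamz q0 z) ^ 4 + (3 / 2) * (q0 : ℂ) ^ 4 - 2 * (lamz q0 z) ^ 2 * (q0 : ℂ) ^ 2)
        * (p.2 : ℂ))

/-- The background solution `Ψ^{bg}(x,t) = Y±(z)·diag(e^{iθ(z;x,t)}, e^{−iθ(z;x,t)})`. -/
def PsiBgZ (q0 : ℝ) (qb : ℂ) (z : ℂ) : ℝ × ℝ → Mat2 := fun p =>
  Yz qb z *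
    !![Complex.exp (Complex.I * thetaz q0 z p), 0;
       0, Complex.exp (-(Complex.I * thetaz q0 z p))]

theorem bg_hasDeriv_exp (c a b : ℂ) (f : ℝ → ℂ) (hf : ∀ y : ℝ, f y = a * y + b) (y : ℝ) :
    deriv (fun y => c * Complex.exp (f y)) y = c * (a * Complex.exp (f y)) := by
  have h0 : HasDerivAt (fun y : ℝ => (y : ℂ)) 1 y := Complex.ofRealCLM.hasDerivAt
  have h1 : HasDerivAt f a y := by
    have h2 := (h0.const_mul a).add_const b
    rw [mul_one] at h2
    rw [funext hf]
    exact h2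
  have h3 := (h1.cexp.const_mul c).deriv
  rw [h3]
  ring

theorem bg_psi_eq (q0 : ℝ) (qb z : ℂ) (p : ℝ × ℝ) :
    PsiBgZ q0 qb z p =
      !![1 * Complex.exp (Complex.I * thetaz q0 z p),
         (Complex.I / z * qb) * Complex.exp (-(Complex.I * thetaz q0 z p));
         (Complex.I / z * conj qb) * Complex.exp (Complex.I * thetaz q0 z p),
         1 * Complex.exp (-(Complex.I * thetaz q0 z p))] := by
  ext i j
  fin_cases i <;> fin_cases j <;>
    simp [PsiBgZ, Yz, sigma3, Qb, Matrix.mul_apply, Fin.sum_univ_two]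

/-- Multiplication by the Lax matrix on the background solution. -/
theorem bg_X_mul (q0 : ℝ) (qb : ℂ) (hqb : ‖qb‖ = q0) (z : ℂ) (hz : z ≠ 0) (p : ℝ × ℝ) :
    Xb qb (lamz q0 z) * PsiBgZ q0 qb z p =
      !![1 * ((Complex.I * (lamz q0 z * kz q0 z)) * Complex.exp (Complex.I * thetaz q0 z p)),
         (Complex.I / z * qb) * (-(Complex.I * (lamz q0 z * kz q0 z)) *
           Complex.exp (-(Complex.I * thetaz q0 z p)));
         (Complex.I / z * conj qb) * ((Complex.I * (lamz q0 z * kz q0 z)) *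
           Complex.exp (Complex.I * thetaz q0 z p)),
         1 * (-(Complex.I * (lamz q0 z * kz q0 z)) *
           Complex.exp (-(Complex.I * thetaz q0 z p)))] := by
  have hq : qb * conj qb = (q0 : ℂ) ^ 2 := by
    rw [Complex.mul_conj, Complex.normSq_eq_norm_sq, hqb]
    push_cast
    rfl
  have hk : kz q0 z = lamz q0 z + qb * conj qb / z := by
    rw [hq, kz, lamz]; ring
  have hl : lamz q0 z + kz q0 z = z := by
    rw [kz, lamz]; ring
  have hk' : kz q0 z / z = 1 - lamz q0 z / z := by
    field_simp
    linear_combination hl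
  rw [bg_psi_eq]
  generalize Complex.exp (Complex.I * thetaz q0 z p) = E
  generalize Complex.exp (-(Complex.I * thetaz q0 z p)) = F
  generalize lamz q0 z = l at *
  generalize kz q0 z = k at *
  have hI := Complex.I_sq
  ext i j
  fin_cases i <;> fin_cases j <;>
    simp [Xb, sigma3, Qb, Matrix.mul_apply, Fin.sum_univ_two]
  · linear_combination (-Complex.I * l * E) * hk
  · linear_combination (l ^ 2 * qb * F / z + l * k / z * qb * F) * hI - l * qb * F * hk'
  · linear_combination (-l ^ 2 * conj qb * E / z - l * k / z * conj qb * E) * hI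
      + l * conj qb * E * hk'
  · linear_combination (Complex.I * l * F) * hk

/-- the background solution `Ψ^{bg} = Y±(z)e^{iθσ₃}` satisfies
`∂ₓΨ^{bg} = X±(λ(z))Ψ^{bg}` and `∂ₜΨ^{bg} = T±(λ(z))Ψ^{bg}`. -/
theorem psiBgZ_solves (q0 : ℝ) (hq0 : 0 < q0) (qb : ℂ) (hqb : ‖qb‖ = q0)
    (z : ℂ) (hz : z ≠ 0) :
    ∀ p : ℝ × ℝ,
      DxM (PsiBgZ q0 qb z) p = Xb qb (lamz q0 z) * PsiBgZ q0 qb z p ∧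
      DtM (PsiBgZ q0 qb z) p = Tb q0 qb (lamz q0 z) * PsiBgZ q0 qb z p := by
  intro p
  set m := 4 * (lamz q0 z) ^ 4 + (3 / 2) * (q0 : ℂ) ^ 4 - 2 * (lamz q0 z) ^ 2 * (q0 : ℂ) ^ 2
    with hm
  constructor
  · rw [bg_X_mul q0 qb hqb z hz p]
    have e1 : ∀ y : ℝ, Complex.I * thetaz q0 z (y, p.2) =
        (Complex.I * (lamz q0 z * kz q0 z)) * y +
          Complex.I * (lamz q0 z * kz q0 z) * (m * p.2) := by
      intro y; simp only [thetaz, hm]; ring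
    have e2 : ∀ y : ℝ, -(Complex.I * thetaz q0 z (y, p.2)) =
        (-(Complex.I * (lamz q0 z * kz q0 z))) * y +
          -(Complex.I * (lamz q0 z * kz q0 z) * (m * p.2)) := by
      intro y; rw [e1]; ring
    have d1 := fun c => bg_hasDeriv_exp c _ _ _ e1 p.1
    have d2 := fun c => bg_hasDeriv_exp c _ _ _ e2 p.1
    ext i j
    simp only [DxM, bg_psi_eq, Matrix.of_apply]
    fin_cases i <;> fin_cases j
    · exact d1 _
    · exact d2 _
    · exact d1 _
    · exact d2 _
  · rw [Tb, Matrix.smul_mul, bg_X_mul q0 qb hqb z hz p, ← hm]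
    have e1 : ∀ y : ℝ, Complex.I * thetaz q0 z (p.1, y) =
        (m * (Complex.I * (lamz q0 z * kz q0 z))) * y +
          Complex.I * (lamz q0 z * kz q0 z) * p.1 := by
      intro y; simp only [thetaz, hm]; ring
    have e2 : ∀ y : ℝ, -(Complex.I * thetaz q0 z (p.1, y)) =
        (m * -(Complex.I * (lamz q0 z * kz q0 z))) * y +
          -(Complex.I * (lamz q0 z * kz q0 z) * p.1) := by
      intro y; rw [e1]; ring
    have d1 := fun c => bg_hasDeriv_exp c _ _ _ e1 p.2
    have d2 := fun c => bg_hasDeriv_exp c _ _ _ e2 p.2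
    have r : ∀ c a E : ℂ, c * (m * a * E) = m * (c * (a * E)) := by
      intro c a E; ring
    ext i j
    simp only [DtM, bg_psi_eq, Matrix.of_apply]
    fin_cases i <;> fin_cases j
    · exact (d1 _).trans (r _ _ _)
    · exact (d2 _).trans (r _ _ _)
    · exact (d1 _).trans (r _ _ _)
    · exact (d2 _).trans (r _ _ _)
end
end

section
/- Fix q0 > 0 and let z ∈ ℂ∖{0}. Then Im(k(z)·λ(z)) = ((|z|⁴ + q0⁴)/(2|z|⁴))·Re(z)·Im(z). Consequently: Im(k(z)λ(z)) > 0 if and only if Re(z)·Im(z) > 0; Im(k(z)λ(z)) < 0 if and only if Re(z)·Im(z) < 0; and Im(k(z)λ(z)) = 0 if and only if z lies on the real or the imaginary axis. -/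
noncomputable section

open Complex Matrix ComplexConjugate

/-- `Im(k(z)λ(z)) = ((|z|⁴ + q₀⁴)/(2|z|⁴))·Re z·Im z`, and the induced
sign characterizations of `Im(k(z)λ(z))`. -/
theorem im_k_lambda (q0 : ℝ) (hq0 : 0 < q0) (z : ℂ) (hz : z ≠ 0) :
    (kz q0 z * lamz q0 z).im
      = ((‖z‖ ^ 4 + q0 ^ 4) / (2 * ‖z‖ ^ 4)) * (z.re * z.im) ∧
    (0 < (kz q0 z * lamz q0 z).im ↔ 0 < z.re * z.im) ∧
    ((kz q0 z * lamz q0 z).im < 0 ↔ z.re * z.im < 0) ∧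
    ((kz q0 z * lamz q0 z).im = 0 ↔ (z.im = 0 ∨ z.re = 0)) := by
  have hN : 0 < z.re * z.re + z.im * z.im := by
    have h := Complex.normSq_pos.mpr hz
    rwa [Complex.normSq_apply] at h
  have hn : ‖z‖ ^ 2 = z.re * z.re + z.im * z.im := by
    rw [← Complex.normSq_apply, Complex.normSq_eq_norm_sq]
  have hn4 : ‖z‖ ^ 4 = (z.re * z.re + z.im * z.im) ^ 2 := by
    rw [← hn]; ring
  have key : (kz q0 z * lamz q0 z).im
      = ((‖z‖ ^ 4 + q0 ^ 4) / (2 * ‖z‖ ^ 4)) * (z.re * z.im) := by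
    have e : kz q0 z * lamz q0 z
        = ((1 / 4 : ℝ) : ℂ) * (z * z - ((q0 ^ 4 : ℝ) : ℂ) * (z⁻¹ * z⁻¹)) := by
      unfold kz lamz
      push_cast
      ring
    rw [e, hn4, Complex.im_ofReal_mul, Complex.sub_im, Complex.im_ofReal_mul, Complex.mul_im,
      Complex.mul_im, Complex.inv_re, Complex.inv_im, Complex.normSq_apply]
    generalize z.re * z.re + z.im * z.im = N at hN
    have hN0 : N ≠ 0 := hN.ne'
    field_simp
    ring
  have hc : 0 < (‖z‖ ^ 4 + q0 ^ 4) / (2 * ‖z‖ ^ 4) := by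
    rw [hn4]; positivity
  refine ⟨key, ?_, ?_, ?_⟩
  · rw [key]; exact mul_pos_iff_of_pos_left hc
  · rw [key]
    exact ⟨fun h => by by_contra! h'; exact absurd h (not_lt.mpr (mul_nonneg hc.le h')),
      fun h => mul_neg_of_pos_of_neg hc h⟩
  · rw [key, mul_eq_zero, mul_eq_zero]
    constructor
    · rintro (h | h | h)
      · exact absurd h hc.ne'
      · exact Or.inr h
      · exact Or.inl h
    · rintro (h | h)
      · exact Or.inr (Or.inr h)
      · exact Or.inr (Or.inl h)
end
end
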